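/- Let Γ be a group generated by a finite set S, let n ≥ 1, and let π : Γ → GL(n, ℝ) be a group homomorphism. Let Γ act on the Lie algebra 𝔤𝔩(n, ℝ) = M_n(ℝ) of GL(n, ℝ) by the adjoint action composed with π: γ · X = π(γ) X π(γ)⁻¹. Assume the first group cohomology H¹(Γ, M_n(ℝ)) with these coefficients vanishes, i.e. every map c : Γ → M_n(ℝ) satisfying c(γ₁γ₂) = c(γ₁) + γ₁ · c(γ₂) for all γ₁, γ₂ ∈ Γ is of the form c(γ) = γ · X − X for some fixed X ∈ M_n(ℝ). Then π is locally rigid: for every neighborhood U of the identity in GL(n, ℝ) there exists a neighborhood V of the identity in GL(n, ℝ) such that every homomorphism π' : Γ → GL(n, ℝ) with π'(s)·π(s)⁻¹ ∈ V for all s ∈ S is conjugate to π by an element of U, i.e. there exists g ∈ U with π'(γ) = g π(γ) g⁻¹ for all γ ∈ Γ. -/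

import Mathlib

/-!
Put `M = M_n(ℝ)` and, for a tuple `A = (A_s)_{s ∈ S}` of matrices, consider the *linear* map
`L_A : M → M^S`, `L_A(X) = (A_s X - X π(s))_s`. An invertible `g` conjugates `π` to `π'` exactly when
`L_{π'}(g) = 0`. Because this equation is linear in `g`, the implicit function theorem can be
replaced by inversion of linear maps near the identity.

Let `P : M^S → M` be a generalized inverse of `L = L_π` (`L P L = L` and `P L P = P`). For `π'` close
to `π` the endomorphism `1 + P (L_{π'} - L)` is close to `1`, so it is invertible, and the preimage
`g` of the identity matrix is close to the identity matrix; it satisfies `P L_{π'} g = 0`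
(`gauge_eq_zero`, `exists_gauge`).

It remains to see that the residue `r = L_{π'}(g)` vanishes once `π'` is close enough to `π`.
Otherwise there is an ultrafilter of homomorphisms converging to `π` along which `r ≠ 0`.
The normalized residues `γ ↦ (π'(γ) g - g π(γ)) / ‖r‖` satisfy a twisted Leibniz rule, hence converge
for all `γ` as soon as they do on `S`, where they are bounded; the limit `c` has norm one on `S`
and satisfies `c(γδ) = π(γ) c(δ) + c(γ) π(δ)`. So `γ ↦ c(γ) π(γ)⁻¹` is a cocycle, and
`H¹ = 0` gives `c|_S = L X` for some `X`. Then `c|_S = L P L X = L P c|_S = 0`, a contradiction.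
-/

open Matrix
open Filter Topology

namespace WeilRigidity

/-- Every linear map over a field has a generalized inverse. -/
lemma exists_generalized_inverse {K V W : Type*} [Field K] [AddCommGroup V] [Module K V]
    [AddCommGroup W] [Module K W] (L : V →ₗ[K] W) :
    ∃ P : W →ₗ[K] V, (∀ x, L (P (L x)) = L x) ∧ (∀ y, P (L (P y)) = P y) := by
  obtain ⟨s, hs⟩ := L.rangeRestrict.exists_rightInverse_of_surjective L.range_rangeRestrict
  obtain ⟨P, hP⟩ := s.exists_extend
  have h : ∀ x, L (P (L x)) = L x := fun x => by
    have h1 : P (L x) = s (L.rangeRestrict x) :=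
      LinearMap.congr_fun hP (L.rangeRestrict x)
    have h2 := LinearMap.congr_fun hs (L.rangeRestrict x)
    rw [h1]
    exact congrArg Subtype.val h2
  exact ⟨P ∘ₗ L ∘ₗ P, fun x => by simp [h], fun y => by simp [h]⟩

/-- If `P` is a generalized inverse of `L`, `L e = 0`, and `g` is mapped to `e` by
`1 + P (L' - L)`, then `P (L' g) = 0`: apply to `g + P (L' - L) g = e` the idempotent `P L`,
which is the identity on the range of `P` and kills `e`. -/
lemma gauge_eq_zero {K V W : Type*} [Field K] [AddCommGroup V] [Module K V]
    [AddCommGroup W] [Module K W] (L L' : V →ₗ[K] W) (P : W →ₗ[K] V)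
    (hP : ∀ y, P (L (P y)) = P y) (e g : V) (he : L e = 0)
    (hg : g + P (L' g - L g) = e) : P (L' g) = 0 := by
  have h := congrArg (fun v => P (L v)) hg
  simp only [map_add, map_sub, hP, he, map_zero] at h
  simpa using h

/-- A continuous family `L x` of linear maps near `L x₀`, with `L x₀ e = 0`: for `x` near `x₀` there is
`g x` near `e` whose residue `L x (g x)` is killed by a given generalized inverse `P` of `L x₀`. -/
lemma exists_gauge {V W X : Type*} [NormedAddCommGroup V] [NormedSpace ℝ V]
    [FiniteDimensional ℝ V] [NormedAddCommGroup W] [NormedSpace ℝ W] [FiniteDimensional ℝ W]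
    [TopologicalSpace X] (L : X → V →ₗ[ℝ] W) (hL : ∀ v, Continuous fun x => L x v) (x₀ : X)
    (P : W →ₗ[ℝ] V) (hP : ∀ y, P (L x₀ (P y)) = P y) (e : V) (he : L x₀ e = 0) :
    ∃ g : X → V, Tendsto g (𝓝 x₀) (𝓝 e) ∧ ∀ᶠ x in 𝓝 x₀, P (L x (g x)) = 0 := by
  have : CompleteSpace V := FiniteDimensional.complete ℝ V
  let T : X → (V →L[ℝ] V) := fun x =>
    LinearMap.toContinuousLinearMap (LinearMap.id + P ∘ₗ (L x - L x₀))
  have hTapp : ∀ x v, T x v = v + P (L x v - L x₀ v) := fun x v => rfl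
  have hTc : Continuous T := by
    refine continuous_clm_apply.2 fun v => ?_
    simp only [hTapp]
    exact continuous_const.add
      (P.continuous_of_finiteDimensional.comp ((hL v).sub continuous_const))
  have hT0 : T x₀ = 1 := by ext v; simp [hTapp]
  have hT : Tendsto T (𝓝 x₀) (𝓝 1) := hT0 ▸ hTc.tendsto x₀
  refine ⟨fun x => Ring.inverse (T x) e, ?_, ?_⟩
  · have h1 : Tendsto (fun x => Ring.inverse (T x)) (𝓝 x₀) (𝓝 1) := by
      have h := (NormedRing.inverse_continuousAt (1 : (V →L[ℝ] V)ˣ)).tendsto.comp hT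
      rwa [Units.val_one, Ring.inverse_one] at h
    exact ((ContinuousLinearMap.apply ℝ V e).continuous.tendsto _).comp h1
  · filter_upwards [hT.eventually (Units.isOpen.mem_nhds isUnit_one)] with x hx
    have h2 : T x (Ring.inverse (T x) e) = e :=
      DFunLike.congr_fun (Ring.mul_inverse_cancel _ hx) e
    exact gauge_eq_zero (L x₀) (L x) P hP e _ he h2

variable {n : ℕ}

/-- Invertible matrices from a neighborhood `U` of `1` in `GL(n, ℝ)` fill a neighborhood of `1` in the
space of all matrices. -/
lemma val_image_mem_nhds {U : Set (GL (Fin n) ℝ)} (hU : U ∈ 𝓝 (1 : GL (Fin n) ℝ)) :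
    {M : Matrix (Fin n) (Fin n) ℝ | ∃ u ∈ U, (u : Matrix (Fin n) (Fin n) ℝ) = M} ∈
      𝓝 (1 : Matrix (Fin n) (Fin n) ℝ) := by
  let _ := Matrix.linftyOpNormedRing (n := Fin n) (α := ℝ)
  let _ := Matrix.linftyOpNormedAlgebra (n := Fin n) (R := ℝ) (α := ℝ)
  have : CompleteSpace (Matrix (Fin n) (Fin n) ℝ) := FiniteDimensional.complete ℝ _
  exact (Units.isOpenEmbedding_val (R := Matrix (Fin n) (Fin n) ℝ)).isOpenMap.image_mem_nhds hU

attribute [local instance] Matrix.normedAddCommGroup Matrix.normedSpace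

variable {Γ : Type*} [Group Γ]

/-- The linear map `X ↦ (A_s X - X π(s))_s` on `M_n(ℝ)`, depending on a tuple `A` of matrices. -/
def twist (S : Set Γ) (π : Γ →* GL (Fin n) ℝ) (A : S → Matrix (Fin n) (Fin n) ℝ) :
    Matrix (Fin n) (Fin n) ℝ →ₗ[ℝ] (S → Matrix (Fin n) (Fin n) ℝ) where
  toFun X s := A s * X - X * (π s : Matrix (Fin n) (Fin n) ℝ)
  map_add' X Y := by ext1 s; simp [mul_add, add_mul]; abel
  map_smul' a X := by ext1 s; simp [smul_sub]

lemma twist_apply (S : Set Γ) (π : Γ →* GL (Fin n) ℝ)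
    (A : S → Matrix (Fin n) (Fin n) ℝ) (X : Matrix (Fin n) (Fin n) ℝ) (s : S) :
    twist S π A X s = A s * X - X * (π s : Matrix (Fin n) (Fin n) ℝ) := rfl

lemma continuous_twist (S : Set Γ) (π : Γ →* GL (Fin n) ℝ) (X : Matrix (Fin n) (Fin n) ℝ) :
    Continuous fun A => twist S π A X := by
  refine continuous_pi fun s => ?_
  simp only [twist_apply]
  fun_prop

lemma exists_gauge_twist (S : Set Γ) [Fintype S] (π : Γ →* GL (Fin n) ℝ)
    (P : (S → Matrix (Fin n) (Fin n) ℝ) →ₗ[ℝ] Matrix (Fin n) (Fin n) ℝ)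
    (hP : ∀ y, P (twist S π (fun s => (π s : Matrix (Fin n) (Fin n) ℝ)) (P y)) = P y) :
    ∃ g : (S → Matrix (Fin n) (Fin n) ℝ) → Matrix (Fin n) (Fin n) ℝ,
      Tendsto g (𝓝 fun s => (π s : Matrix (Fin n) (Fin n) ℝ)) (𝓝 1) ∧
      ∀ᶠ A in 𝓝 fun s : S => (π s : Matrix (Fin n) (Fin n) ℝ), P (twist S π A (g A)) = 0 :=
  exists_gauge (V := Matrix (Fin n) (Fin n) ℝ) (W := S → Matrix (Fin n) (Fin n) ℝ) (twist S π)
    (continuous_twist S π) (fun s => (π s : Matrix (Fin n) (Fin n) ℝ)) P hP 1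
    (by ext1 s; simp [twist_apply])

lemma tendsto_of_generators {S : Set Γ} (hS : Subgroup.closure S = ⊤) (π : Γ →* GL (Fin n) ℝ)
    (f : Filter (Γ →* GL (Fin n) ℝ))
    (h : ∀ s ∈ S, Tendsto (fun π' : Γ →* GL (Fin n) ℝ => π' s) f (𝓝 (π s)))
    (γ : Γ) : Tendsto (fun π' : Γ →* GL (Fin n) ℝ => π' γ) f (𝓝 (π γ)) := by
  have hγ : γ ∈ Subgroup.closure S := hS ▸ Subgroup.mem_top γ
  induction hγ using Subgroup.closure_induction with
  | mem x hx => exact h x hx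
  | one => simpa using tendsto_const_nhds
  | mul x y _ _ hx hy => simpa using hx.mul hy
  | inv x _ hx => simpa using hx.inv

/-- Functions satisfying the twisted Leibniz rule along `f` converge pointwise on `Γ` as soon as they
do so on a generating set. -/
lemma exists_limit_of_generators {S : Set Γ} (hS : Subgroup.closure S = ⊤) (π : Γ →* GL (Fin n) ℝ)
    (f : Filter (Γ →* GL (Fin n) ℝ))
    (hf : ∀ γ, Tendsto (fun π' : Γ →* GL (Fin n) ℝ => (π' γ : Matrix (Fin n) (Fin n) ℝ)) f
      (𝓝 (π γ : Matrix (Fin n) (Fin n) ℝ)))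
    (c : (Γ →* GL (Fin n) ℝ) → Γ → Matrix (Fin n) (Fin n) ℝ)
    (hc : ∀ π' γ δ, c π' (γ * δ) = (π' γ : Matrix (Fin n) (Fin n) ℝ) * c π' δ
      + c π' γ * (π δ : Matrix (Fin n) (Fin n) ℝ))
    (h : ∀ s ∈ S, ∃ l, Tendsto (fun π' => c π' s) f (𝓝 l)) (γ : Γ) :
    ∃ l, Tendsto (fun π' => c π' γ) f (𝓝 l) := by
  have hc1 : ∀ π', c π' 1 = 0 := fun π' => by simpa using hc π' 1 1
  have hcinv : ∀ π' γ, c π' γ⁻¹ = -((π' γ⁻¹ : GL (Fin n) ℝ) : Matrix (Fin n) (Fin n) ℝ) * c π' γ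
      * ((π γ⁻¹ : GL (Fin n) ℝ) : Matrix (Fin n) (Fin n) ℝ) := fun π' γ => by
    have h1 := hc π' γ⁻¹ γ
    rw [inv_mul_cancel, hc1] at h1
    have h2 : c π' γ⁻¹ * (π γ : Matrix (Fin n) (Fin n) ℝ)
        = -((π' γ⁻¹ : GL (Fin n) ℝ) : Matrix (Fin n) (Fin n) ℝ) * c π' γ := by
      rw [neg_mul]; exact eq_neg_of_add_eq_zero_right h1.symm
    rw [← h2, mul_assoc, ← Units.val_mul, ← map_mul]
    simp
  have hγ : γ ∈ Subgroup.closure S := hS ▸ Subgroup.mem_top γ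
  induction hγ using Subgroup.closure_induction with
  | mem x hx => exact h x hx
  | one => exact ⟨0, by simpa [hc1] using tendsto_const_nhds⟩
  | mul x y _ _ hx hy =>
    obtain ⟨a, ha⟩ := hx
    obtain ⟨b, hb⟩ := hy
    simp only [hc]
    exact ⟨_, ((hf x).mul hb).add (ha.mul tendsto_const_nhds)⟩
  | inv x _ hx =>
    obtain ⟨a, ha⟩ := hx
    simp only [hcinv]
    exact ⟨_, ((hf x⁻¹).neg.mul ha).mul tendsto_const_nhds⟩

/-- The residue vanishes along every ultrafilter of homomorphisms converging to `π`, provided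
`H¹ = 0` and the residue is killed by a generalized inverse `P`. -/
lemma residue_eventually_zero {S : Set Γ} [Fintype S] (hS : Subgroup.closure S = ⊤)
    (π : Γ →* GL (Fin n) ℝ)
    (hH1 : ∀ c : Γ → Matrix (Fin n) (Fin n) ℝ,
      (∀ γ₁ γ₂ : Γ,
        c (γ₁ * γ₂) = c γ₁ + (π γ₁ : Matrix (Fin n) (Fin n) ℝ) * c γ₂ * ((π γ₁)⁻¹ : GL (Fin n) ℝ)) →
      ∃ X : Matrix (Fin n) (Fin n) ℝ,
        ∀ γ : Γ,
          c γ = (π γ : Matrix (Fin n) (Fin n) ℝ) * X * ((π γ)⁻¹ : GL (Fin n) ℝ) - X)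
    (P : (S → Matrix (Fin n) (Fin n) ℝ) →ₗ[ℝ] Matrix (Fin n) (Fin n) ℝ)
    (hP : ∀ X, twist S π (fun s => (π s : Matrix (Fin n) (Fin n) ℝ))
      (P (twist S π (fun s => (π s : Matrix (Fin n) (Fin n) ℝ)) X))
        = twist S π (fun s => (π s : Matrix (Fin n) (Fin n) ℝ)) X)
    (f : Ultrafilter (Γ →* GL (Fin n) ℝ))
    (hf : ∀ γ, Tendsto (fun π' : Γ →* GL (Fin n) ℝ => (π' γ : Matrix (Fin n) (Fin n) ℝ)) f
      (𝓝 (π γ : Matrix (Fin n) (Fin n) ℝ)))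
    (g : (Γ →* GL (Fin n) ℝ) → Matrix (Fin n) (Fin n) ℝ)
    (hPg : ∀ᶠ π' in f, P (twist S π (fun s => (π' s : Matrix (Fin n) (Fin n) ℝ)) (g π')) = 0) :
    ∀ᶠ π' in f, twist S π (fun s => (π' s : Matrix (Fin n) (Fin n) ℝ)) (g π') = 0 := by
  by_contra hne
  rw [← Ultrafilter.eventually_not] at hne
  set r : (Γ →* GL (Fin n) ℝ) → S → Matrix (Fin n) (Fin n) ℝ := fun π' =>
    twist S π (fun s => (π' s : Matrix (Fin n) (Fin n) ℝ)) (g π') with hr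
  set c : (Γ →* GL (Fin n) ℝ) → Γ → Matrix (Fin n) (Fin n) ℝ := fun π' γ =>
    ‖r π'‖⁻¹ • ((π' γ : Matrix (Fin n) (Fin n) ℝ) * g π'
      - g π' * (π γ : Matrix (Fin n) (Fin n) ℝ)) with hcdef
  have hc : ∀ π' γ δ, c π' (γ * δ) = (π' γ : Matrix (Fin n) (Fin n) ℝ) * c π' δ
      + c π' γ * (π δ : Matrix (Fin n) (Fin n) ℝ) := fun π' γ δ => by
    simp only [hcdef, map_mul, Units.val_mul, mul_smul_comm, smul_mul_assoc, ← smul_add]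
    congr 1
    noncomm_ring
  have hcr : ∀ π' (s : S), c π' s = (‖r π'‖⁻¹ • r π') s := fun π' s => rfl
  have hnorm : ∀ π', ‖‖r π'‖⁻¹ • r π'‖ ≤ 1 := fun π' => by
    rw [norm_smul, norm_inv, norm_norm]
    exact inv_mul_le_one
  have hlim : ∀ γ, ∃ l, Tendsto (fun π' => c π' γ) f (𝓝 l) := by
    refine exists_limit_of_generators hS π f hf c hc fun s hs => ?_
    -- On generators the normalized residues stay in the compact unit ball.
    have hK : IsCompact (Metric.closedBall (0 : Matrix (Fin n) (Fin n) ℝ) 1) :=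
      isCompact_closedBall _ _
    obtain ⟨l, -, hl⟩ := hK.ultrafilter_le_nhds (f.map fun π' => c π' s) (by
      rw [le_principal_iff]
      refine Ultrafilter.mem_map.2 (Eventually.of_forall fun π' => ?_)
      change c π' s ∈ _
      rw [mem_closedBall_zero_iff, hcr π' ⟨s, hs⟩]
      exact (norm_le_pi_norm _ _).trans (hnorm π'))
    exact ⟨l, hl⟩
  choose l hl using hlim
  have hlmul : ∀ γ δ, l (γ * δ) = (π γ : Matrix (Fin n) (Fin n) ℝ) * l δ
      + l γ * (π δ : Matrix (Fin n) (Fin n) ℝ) := fun γ δ => by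
    refine tendsto_nhds_unique (hl (γ * δ)) ?_
    simp only [hc]
    exact ((hf γ).mul (hl δ)).add ((hl γ).mul tendsto_const_nhds)
  obtain ⟨X, hX⟩ := hH1 (fun γ => l γ * ((π γ)⁻¹ : GL (Fin n) ℝ)) fun γ δ => by
    rw [hlmul, map_mul, _root_.mul_inv_rev, Units.val_mul, add_comm, add_mul]
    congr 1
    · rw [mul_assoc, ← mul_assoc (π δ : Matrix (Fin n) (Fin n) ℝ), Units.mul_inv, one_mul]
    · simp only [mul_assoc]
  have hlS : (fun s : S => l s) = twist S π (fun s => (π s : Matrix (Fin n) (Fin n) ℝ)) X := by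
    ext1 s
    have h := congrArg (· * (π s : Matrix (Fin n) (Fin n) ℝ)) (hX s)
    simpa [sub_mul, mul_assoc, twist_apply] using h
  have hrl : Tendsto (fun π' => ‖r π'‖⁻¹ • r π') f (𝓝 fun s : S => l s) :=
    tendsto_pi_nhds.2 fun s => hl s
  have hnl : ‖fun s : S => l s‖ = 1 := by
    refine tendsto_nhds_unique hrl.norm (tendsto_const_nhds.congr' ?_)
    filter_upwards [hne] with π' h
    rw [norm_smul, norm_inv, norm_norm, inv_mul_cancel₀ (norm_ne_zero_iff.2 h)]
  have hPl : P (fun s : S => l s) = 0 := by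
    refine tendsto_nhds_unique ((P.continuous_of_finiteDimensional.tendsto _).comp hrl)
      (tendsto_const_nhds.congr' ?_)
    filter_upwards [hPg] with π' h
    simp [hr, h]
  have h0 : (fun s : S => l s) = 0 := by
    rw [hlS, ← hP X, ← hlS, hPl, map_zero]
  rw [h0, norm_zero] at hnl
  exact zero_ne_one hnl

end WeilRigidity

/-- **Weil's local rigidity criterion, for representations into `GL(n, ℝ)`.**
Let `Γ` be a group generated by a finite set `S` and `π : Γ → GL(n, ℝ)` a homomorphism.
Let `Γ` act on the Lie algebra `M_n(ℝ)` of `GL(n, ℝ)` by `Ad ∘ π`, i.e.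
`γ · X = π(γ) X π(γ)⁻¹`. If `H¹(Γ, M_n(ℝ)) = 0` — every cocycle
`c : Γ → M_n(ℝ)` with `c(γ₁γ₂) = c(γ₁) + γ₁ · c(γ₂)` is a coboundary
`c(γ) = γ · X − X` — then `π` is locally rigid: for every neighborhood `U` of `1` in
`GL(n, ℝ)` there is a neighborhood `V` of `1` such that every homomorphism
`π' : Γ → GL(n, ℝ)` with `π'(s) π(s)⁻¹ ∈ V` for all `s ∈ S` is conjugate to `π` by an
element of `U`. -/
theorem weil_local_rigidity_GL
    {Γ : Type*} [Group Γ] (S : Set Γ) (hSfin : S.Finite)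
    (hSgen : Subgroup.closure S = ⊤)
    (n : ℕ)
    (π : Γ →* GL (Fin n) ℝ)
    (hH1 : ∀ c : Γ → Matrix (Fin n) (Fin n) ℝ,
      (∀ γ₁ γ₂ : Γ,
        c (γ₁ * γ₂) = c γ₁ + (π γ₁ : Matrix (Fin n) (Fin n) ℝ) * c γ₂ * ((π γ₁)⁻¹ : GL (Fin n) ℝ)) →
      ∃ X : Matrix (Fin n) (Fin n) ℝ,
        ∀ γ : Γ,
          c γ = (π γ : Matrix (Fin n) (Fin n) ℝ) * X * ((π γ)⁻¹ : GL (Fin n) ℝ) - X) :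
    ∀ U ∈ nhds (1 : GL (Fin n) ℝ), ∃ V ∈ nhds (1 : GL (Fin n) ℝ),
      ∀ π' : Γ →* GL (Fin n) ℝ,
        (∀ s ∈ S, π' s * (π s)⁻¹ ∈ V) →
        ∃ g ∈ U, ∀ γ : Γ, π' γ = g * π γ * g⁻¹ := by
  classical
  have : Fintype S := hSfin.fintype
  obtain ⟨P, hP1, hP2⟩ := WeilRigidity.exists_generalized_inverse
    (WeilRigidity.twist S π fun s => (π s : Matrix (Fin n) (Fin n) ℝ))
  obtain ⟨g, hg1, hPg⟩ := WeilRigidity.exists_gauge_twist S π P hP2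
  intro U hU
  -- Membership in this filter is exactly the existence of a suitable `V`.
  let F : Filter (Γ →* GL (Fin n) ℝ) :=
    (𝓝 (1 : GL (Fin n) ℝ)).lift' fun V => {π' | ∀ s ∈ S, π' s * (π s)⁻¹ ∈ V}
  have hmono : Monotone fun V : Set (GL (Fin n) ℝ) =>
      {π' : Γ →* GL (Fin n) ℝ | ∀ s ∈ S, π' s * (π s)⁻¹ ∈ V} :=
    fun V W hVW π' h s hs => hVW (h s hs)
  suffices hF : {π' : Γ →* GL (Fin n) ℝ | ∃ g ∈ U, ∀ γ : Γ, π' γ = g * π γ * g⁻¹} ∈ F by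
    obtain ⟨V, hV, hVF⟩ := (mem_lift'_sets hmono).1 hF
    exact ⟨V, hV, fun π' h => hVF h⟩
  refine mem_iff_ultrafilter.2 fun f hfF => ?_
  have hfGL := WeilRigidity.tendsto_of_generators hSgen π f fun s hs => by
    have h1 : Tendsto (fun π' : Γ →* GL (Fin n) ℝ => π' s * (π s)⁻¹) f (𝓝 1) := fun V hV =>
      hfF (mem_of_superset (mem_lift' hV) fun π' h => h s hs)
    simpa using h1.mul_const (π s)
  have hf : ∀ γ, Tendsto (fun π' : Γ →* GL (Fin n) ℝ => (π' γ : Matrix (Fin n) (Fin n) ℝ)) f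
      (𝓝 (π γ : Matrix (Fin n) (Fin n) ℝ)) :=
    fun γ => (Units.continuous_val.tendsto _).comp (hfGL γ)
  have hfS : Tendsto (fun (π' : Γ →* GL (Fin n) ℝ) (s : S) => (π' s : Matrix (Fin n) (Fin n) ℝ)) f
      (𝓝 fun s : S => (π s : Matrix (Fin n) (Fin n) ℝ)) :=
    tendsto_pi_nhds.2 fun s => hf s
  have hzero := WeilRigidity.residue_eventually_zero hSgen π hH1 P hP1 f hf
    (fun π' => g fun s => (π' s : Matrix (Fin n) (Fin n) ℝ)) (hfS.eventually hPg)
  filter_upwards [hzero, (hg1.comp hfS).eventually (WeilRigidity.val_image_mem_nhds hU)]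
    with π' h0 hu
  obtain ⟨u, huU, hu⟩ := hu
  refine ⟨u, huU, ?_⟩
  have heq : π' = (MulAut.conj u).toMonoidHom.comp π := by
    refine MonoidHom.eq_of_eqOn_dense hSgen fun s hs => ?_
    have h1 := congrFun h0 ⟨s, hs⟩
    rw [WeilRigidity.twist_apply, Pi.zero_apply, sub_eq_zero] at h1
    simp only [Function.comp_apply] at hu
    rw [← hu, ← Units.val_mul, ← Units.val_mul] at h1
    simpa [eq_mul_inv_iff_mul_eq] using Units.ext h1
  intro γ
  simpa using DFunLike.congr_fun heq γ
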